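/- Let Q: ℝ^d → ℝ be a nondegenerate indefinite quadratic form with d ≥ 5, let n ≥ 2, and let I₁, …, I_{n-1} be bounded intervals. Define P = {v = (v₁,…,v_n) ∈ ℝ^{nd} : Q(vᵢ) - Q(v_{i+1}) ∈ Iᵢ for 1 ≤ i ≤ n-1} and B(T) = {v ∈ ℝ^{nd} : ‖v‖ ≤ T}. Then there exists a positive constant C_{Q,n} depending only on Q, n, d such that lim_{T→∞} T^{-(nd - 2(n-1))} Vol(P ∩ B(T)) = C_{Q,n} · ∏_{i=1}^{n-1} |Iᵢ|. -/

import Mathlib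

open MeasureTheory Filter

lemma LinearEquiv.exists_map_addHaar_eq_smul {E F : Type*}
    [NormedAddCommGroup E] [NormedSpace ℝ E] [FiniteDimensional ℝ E] [MeasurableSpace E]
    [BorelSpace E] [NormedAddCommGroup F] [NormedSpace ℝ F] [FiniteDimensional ℝ F]
    [MeasurableSpace F] [BorelSpace F] (L : E ≃ₗ[ℝ] F) (μ : Measure E) [μ.IsAddHaarMeasure]
    (ν : Measure F) [ν.IsAddHaarMeasure] :
    ∃ c : ℝ, 0 < c ∧ μ.map L = ENNReal.ofReal c • ν := by
  have : (μ.map L).IsAddHaarMeasure :=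
    AddEquiv.isAddHaarMeasure_map μ L.toAddEquiv
      (LinearMap.continuous_of_finiteDimensional L.toLinearMap)
      (LinearMap.continuous_of_finiteDimensional L.symm.toLinearMap)
  refine ⟨Measure.addHaarScalarFactor (μ.map L) ν,
    Measure.addHaarScalarFactor_pos_of_isAddHaarMeasure _ _, ?_⟩
  conv_lhs => rw [Measure.isAddLeftInvariant_eq_smul (μ.map L) ν]
  rw [ENNReal.ofReal_coe_nnreal]
  rfl

lemma lintegral_pi_prod_eq_prod {X : Type*} [MeasurableSpace X] (n : ℕ)
    (μ : Fin n → Measure X) [∀ i, SigmaFinite (μ i)] {f : X → ENNReal} (hf : Measurable f) :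
    ∫⁻ x, ∏ i, f (x i) ∂(Measure.pi μ) = ∏ i, ∫⁻ x, f x ∂(μ i) := by
  induction n with
  | zero => simp
  | succ n ih =>
    have h := measurePreserving_piFinSuccAbove μ 0
    have := h.lintegral_comp_emb (MeasurableEquiv.measurableEmbedding _)
      (fun p => f p.1 * ∏ i, f (p.2 i))
    have hprod := lintegral_prod_mul (μ := μ 0) (ν := Measure.pi fun j => μ (Fin.succAbove 0 j))
      (g := fun y : Fin n → X => ∏ i, f (y i)) hf.aemeasurable
      (Finset.measurable_prod _ fun i _ => hf.comp (measurable_pi_apply i)).aemeasurable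
    rw [Fin.prod_univ_succ]
    rw [ih] at hprod
    refine Eq.trans ?_ hprod
    refine Eq.trans ?_ this
    refine lintegral_congr fun x => ?_
    rw [Fin.prod_univ_succ]
    rfl

lemma pi_withDensity_eq {X : Type*} [MeasurableSpace X] (n : ℕ)
    (μ : Measure X) [SigmaFinite μ] {f : X → ENNReal} (hf : Measurable f)
    [SigmaFinite (μ.withDensity f)] :
    Measure.pi (fun _ : Fin n => μ.withDensity f) =
      (Measure.pi fun _ : Fin n => μ).withDensity fun x => ∏ i, f (x i) := by
  refine Measure.pi_eq fun s hs => ?_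
  rw [withDensity_apply _ (MeasurableSet.univ_pi hs), Measure.restrict_pi_pi,
    lintegral_pi_prod_eq_prod _ _ hf]
  exact Finset.prod_congr rfl fun i _ => (withDensity_apply _ (hs i)).symm

lemma lintegral_comp_smul_pi (m : ℕ) {ε : ℝ} (hε : 0 < ε) (h : (Fin m → ℝ) → ENNReal) :
    ∫⁻ t, h t = ENNReal.ofReal (ε ^ m) * ∫⁻ t, h (ε • t) := by
  have h1 := Measure.map_addHaar_smul (volume : Measure (Fin m → ℝ)) hε.ne'
  have h2 : ∫⁻ t, h (ε • t) = ∫⁻ t, h t ∂(Measure.map (ε • ·) volume) :=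
    ((Homeomorph.smulOfNeZero ε hε.ne').measurableEmbedding.lintegral_map h).symm
  rw [h2, h1, lintegral_smul_measure, smul_eq_mul, ← mul_assoc,
    ← ENNReal.ofReal_mul (by positivity),
    Module.finrank_fin_fun, abs_of_pos (by positivity), mul_inv_cancel₀ (by positivity)]
  simp

lemma exists_linearEquiv_consecutive_diff (m : ℕ) :
    ∃ D : (Fin (m + 1) → ℝ) ≃ₗ[ℝ] ℝ × (Fin m → ℝ),
      ∀ σ, D σ = (σ 0, fun i => σ i.castSucc - σ i.succ) := by
  let f : (Fin (m + 1) → ℝ) →ₗ[ℝ] ℝ × (Fin m → ℝ) :=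
    { toFun := fun σ => (σ 0, fun i => σ i.castSucc - σ i.succ)
      map_add' := fun x y => by ext <;> simp; ring
      map_smul' := fun c x => by ext <;> simp; ring }
  have hf : Function.Injective f := by
    refine (injective_iff_map_eq_zero f).2 fun σ h => ?_
    have h0 : σ 0 = 0 := congrArg Prod.fst h
    have hs : ∀ i : Fin m, σ i.castSucc - σ i.succ = 0 := fun i => congrFun (congrArg Prod.snd h) i
    funext i
    induction i using Fin.induction with
    | zero => exact h0
    | succ i ih => have := hs i; rw [ih] at this; simpa using this
  exact ⟨f.linearEquivOfInjective hf (by simp [add_comm]), fun σ => rfl⟩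

lemma tendsto_lintegral_consecutive_diff {Z : Type*} [MeasurableSpace Z] (ζ : Measure Z)
    [SFinite ζ] {m : ℕ} {Φ : Z × (Fin (m + 1) → ℝ) → ENNReal} (hΦ : Measurable Φ)
    {A : Set Z} (hA : MeasurableSet A) (hζA : ζ A ≠ ⊤) {B : ENNReal} (hB : B ≠ ⊤) {M : ℝ}
    (hdom : ∀ z σ, Φ (z, σ) ≤ (A ×ˢ Set.Icc (-M) M).indicator (fun _ => B) (z, σ 0))
    (hcont : ∀ᵐ p ∂(ζ.prod (volume : Measure ℝ)),
      ContinuousAt (fun σ => Φ (p.1, σ)) (fun _ => p.2)) :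
    ∃ c : ℝ, 0 < c ∧ ∀ a b : Fin m → ℝ, (∀ i, a i ≤ b i) →
      Tendsto (fun ε : ℝ => (ENNReal.ofReal (ε ^ m))⁻¹ *
          ∫⁻ p, {p : Z × (Fin (m + 1) → ℝ) | ∀ i : Fin m,
            p.2 i.castSucc - p.2 i.succ ∈ Set.Icc (ε * a i) (ε * b i)}.indicator Φ p
              ∂(ζ.prod volume))
        (nhdsWithin 0 (Set.Ioi 0))
        (nhds (ENNReal.ofReal (c * ∏ i, (b i - a i)) *
          ∫⁻ p, Φ (p.1, fun _ => p.2) ∂(ζ.prod (volume : Measure ℝ)))) := by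
  obtain ⟨D, hD⟩ := exists_linearEquiv_consecutive_diff m
  obtain ⟨c, hc, hmap⟩ := D.exists_map_addHaar_eq_smul volume
    ((volume : Measure ℝ).prod (volume : Measure (Fin m → ℝ)))
  rw [← Measure.volume_eq_prod] at hmap
  have hDc : Continuous D.symm := LinearMap.continuous_of_finiteDimensional D.symm.toLinearMap
  have hDs0 : ∀ s t, D.symm (s, t) 0 = s := fun s t => by
    have := hD (D.symm (s, t)); rw [D.apply_symm_apply] at this
    exact (congrArg Prod.fst this).symm
  have hDs : ∀ s t (i : Fin m), D.symm (s, t) i.castSucc - D.symm (s, t) i.succ = t i :=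
    fun s t i => by
      have := hD (D.symm (s, t)); rw [D.apply_symm_apply] at this
      exact (congrFun (congrArg Prod.snd this) i).symm
  have hDz : ∀ s, D.symm (s, 0) = fun _ => s := fun s => by
    rw [LinearEquiv.symm_apply_eq, hD]; ext <;> simp
  have hint : ∀ f : (Fin (m + 1) → ℝ) → ENNReal, Measurable f →
      ∫⁻ σ, f σ = ENNReal.ofReal c * ∫⁻ p, f (D.symm p) := fun f hf => by
    have h1 : ∫⁻ σ, f σ = ∫⁻ p, f (D.symm p) ∂(volume.map D) := by
      have hfD : Measurable fun p => f (D.symm p) := hf.comp hDc.measurable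
      have hDm : Measurable D :=
        (LinearMap.continuous_of_finiteDimensional D.toLinearMap).measurable
      rw [lintegral_map hfD hDm]
      simp
    rw [h1, hmap, lintegral_smul_measure, smul_eq_mul]
  refine ⟨c, hc, fun a b hab => ?_⟩
  have hK : MeasurableSet (Set.Icc a b) := measurableSet_Icc
  -- the integral after the change of variables `σ = D⁻¹ (s, ε t)`
  have hchange : ∀ ε : ℝ, 0 < ε → (ENNReal.ofReal (ε ^ m))⁻¹ *
      ∫⁻ p, {p : Z × (Fin (m + 1) → ℝ) | ∀ i : Fin m,
        p.2 i.castSucc - p.2 i.succ ∈ Set.Icc (ε * a i) (ε * b i)}.indicator Φ p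
          ∂(ζ.prod volume) =
      ENNReal.ofReal c * ∫⁻ x, (Set.Icc a b).indicator
        (fun t => Φ (x.1.1, D.symm (x.1.2, ε • t))) x.2
          ∂((ζ.prod (volume : Measure ℝ)).prod (volume : Measure (Fin m → ℝ))) := by
    intro ε hε
    set S : Set (Z × (Fin (m + 1) → ℝ)) := {p | ∀ i : Fin m,
        p.2 i.castSucc - p.2 i.succ ∈ Set.Icc (ε * a i) (ε * b i)} with hSdef
    have hS : MeasurableSet S := by
      simp only [hSdef, Set.ofPred_forall]
      refine MeasurableSet.iInter fun i => ?_
      exact (by fun_prop : Measurable fun p : Z × (Fin (m + 1) → ℝ) =>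
        p.2 i.castSucc - p.2 i.succ) measurableSet_Icc
    have hmem : ∀ z s t, (z, D.symm (s, ε • t)) ∈ S ↔ t ∈ Set.Icc a b := fun z s t => by
      simp only [hSdef, Set.mem_ofPred_eq, hDs, Set.mem_Icc, Pi.smul_apply, smul_eq_mul, Pi.le_def]
      simp only [mul_le_mul_iff_right₀ hε, forall_and]
    have hSΦ : Measurable (S.indicator Φ) := hΦ.indicator hS
    have hm2 : Measurable fun x : (Z × ℝ) × (Fin m → ℝ) => (Set.Icc a b).indicator
        (fun t => Φ (x.1.1, D.symm (x.1.2, ε • t))) x.2 := by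
      have : Measurable fun x : (Z × ℝ) × (Fin m → ℝ) => Φ (x.1.1, D.symm (x.1.2, ε • x.2)) :=
        hΦ.comp (by
          refine (by fun_prop : Measurable fun x : (Z × ℝ) × (Fin m → ℝ) => x.1.1).prodMk ?_
          exact hDc.measurable.comp (by fun_prop))
      exact this.indicator (measurable_snd hK)
    rw [lintegral_prod _ hSΦ.aemeasurable, lintegral_prod _ hm2.aemeasurable,
      lintegral_prod _ hm2.lintegral_prod_right'.aemeasurable]
    have key : ∀ z, ∫⁻ σ, S.indicator Φ (z, σ) = ENNReal.ofReal c * (ENNReal.ofReal (ε ^ m) *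
        ∫⁻ s, ∫⁻ t, (Set.Icc a b).indicator (fun t => Φ (z, D.symm (s, ε • t))) t) := by
      intro z
      have hz : Measurable fun σ => S.indicator Φ (z, σ) := hSΦ.comp measurable_prodMk_left
      have hzD : Measurable fun p => S.indicator Φ (z, D.symm p) := hz.comp hDc.measurable
      rw [hint _ hz, Measure.volume_eq_prod, lintegral_prod _ hzD.aemeasurable]
      congr 1
      rw [← lintegral_const_mul' _ _ ENNReal.ofReal_ne_top]
      refine lintegral_congr fun s => ?_
      rw [lintegral_comp_smul_pi m hε]
      congr 1
      refine lintegral_congr fun t => ?_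
      by_cases ht : t ∈ Set.Icc a b
      · rw [Set.indicator_of_mem ht, Set.indicator_of_mem ((hmem z s t).2 ht)]
      · rw [Set.indicator_of_notMem ht, Set.indicator_of_notMem (mt (hmem z s t).1 ht)]
    simp only [key]
    rw [lintegral_const_mul' _ _ ENNReal.ofReal_ne_top,
      lintegral_const_mul' _ _ ENNReal.ofReal_ne_top, mul_left_comm,
      ← mul_assoc _ (ENNReal.ofReal _),
      ENNReal.inv_mul_cancel (by simpa using pow_pos hε m) ENNReal.ofReal_ne_top, one_mul]
  have hlim : ENNReal.ofReal (c * ∏ i, (b i - a i)) *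
      ∫⁻ p, Φ (p.1, fun _ => p.2) ∂(ζ.prod (volume : Measure ℝ)) =
      ENNReal.ofReal c * ∫⁻ x, (Set.Icc a b).indicator
        (fun t => Φ (x.1.1, fun _ => x.1.2)) x.2
          ∂((ζ.prod (volume : Measure ℝ)).prod (volume : Measure (Fin m → ℝ))) := by
    have hm : Measurable fun p : Z × ℝ => Φ (p.1, fun _ => p.2) :=
      hΦ.comp (measurable_fst.prodMk (by fun_prop))
    have := lintegral_prod_mul (μ := ζ.prod (volume : Measure ℝ))
      (ν := (volume : Measure (Fin m → ℝ))) hm.aemeasurable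
      (g := (Set.Icc a b).indicator 1) (measurable_one.indicator hK).aemeasurable
    rw [ENNReal.ofReal_mul hc.le, mul_assoc]
    congr 1
    rw [lintegral_indicator_one hK, Real.volume_Icc_pi,
      ← ENNReal.ofReal_prod_of_nonneg fun i _ => sub_nonneg.2 (hab i), mul_comm] at this
    rw [← this]
    refine lintegral_congr fun x => ?_
    by_cases hx : x.2 ∈ Set.Icc a b <;> simp [hx]
  rw [hlim]
  refine Tendsto.congr' (f₁ := fun ε : ℝ => ENNReal.ofReal c * ∫⁻ x, (Set.Icc a b).indicator
        (fun t => Φ (x.1.1, D.symm (x.1.2, ε • t))) x.2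
          ∂((ζ.prod (volume : Measure ℝ)).prod (volume : Measure (Fin m → ℝ)))) ?_ ?_
  · filter_upwards [self_mem_nhdsWithin] with ε hε using (hchange ε hε).symm
  refine ENNReal.Tendsto.const_mul ?_ (Or.inr ENNReal.ofReal_ne_top)
  refine tendsto_lintegral_filter_of_dominated_convergence
    (((A ×ˢ Set.Icc (-M) M) ×ˢ Set.Icc a b).indicator fun _ => B) ?_ ?_ ?_ ?_
  · refine Eventually.of_forall fun ε => ?_
    have : Measurable fun x : (Z × ℝ) × (Fin m → ℝ) => Φ (x.1.1, D.symm (x.1.2, ε • x.2)) :=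
      hΦ.comp (by
        refine (by fun_prop : Measurable fun x : (Z × ℝ) × (Fin m → ℝ) => x.1.1).prodMk ?_
        exact hDc.measurable.comp (by fun_prop))
    exact this.indicator (measurable_snd hK)
  · refine Eventually.of_forall fun ε => Eventually.of_forall fun ⟨⟨z, s⟩, t⟩ => ?_
    by_cases ht : t ∈ Set.Icc a b
    · have := hdom z (D.symm (s, ε • t))
      rw [hDs0] at this
      rw [Set.indicator_of_mem ht]
      refine this.trans (le_of_eq ?_)
      by_cases h : (z, s) ∈ A ×ˢ Set.Icc (-M) M
      · rw [Set.indicator_of_mem h, Set.indicator_of_mem (Set.mk_mem_prod h ht)]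
      · rw [Set.indicator_of_notMem h, Set.indicator_of_notMem fun h' => h h'.1]
    · rw [Set.indicator_of_notMem ht]; exact zero_le
  · rw [lintegral_indicator_const ((hA.prod measurableSet_Icc).prod hK), Measure.prod_prod,
      Measure.prod_prod]
    refine ENNReal.mul_ne_top hB (ENNReal.mul_ne_top (ENNReal.mul_ne_top hζA ?_) ?_)
    · exact measure_Icc_lt_top.ne
    · exact isCompact_Icc.measure_ne_top
  · have hq := (Measure.quasiMeasurePreserving_fst
      (μ := ζ.prod (volume : Measure ℝ)) (ν := (volume : Measure (Fin m → ℝ)))).ae hcont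
    filter_upwards [hq] with x hx
    by_cases ht : x.2 ∈ Set.Icc a b
    · simp only [Set.indicator_of_mem ht]
      have h2 : Tendsto (fun ε : ℝ => D.symm (x.1.2, ε • x.2)) (nhdsWithin 0 (Set.Ioi 0))
          (nhds fun _ => x.1.2) := by
        have : Continuous fun ε : ℝ => D.symm (x.1.2, ε • x.2) := hDc.comp (by fun_prop)
        have h3 := this.tendsto 0
        rw [zero_smul, hDz] at h3
        exact h3.mono_left nhdsWithin_le_nhds
      exact hx.tendsto.comp h2
    · simp only [Set.indicator_of_notMem ht]; exact tendsto_const_nhds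

lemma volume_pi_eq_lintegral_of_map {Y : Type*} [MeasurableSpace Y] (ν : Measure Y) [SigmaFinite ν]
    {d : ℕ} {Ψ : Y × ℝ → Fin d → ℝ} {W : Y × ℝ → ℝ} (hΨ : Measurable Ψ) (hW : Measurable W)
    (hvol : (volume : Measure (Fin d → ℝ)) =
      ((ν.prod volume).withDensity fun p => ENNReal.ofReal (W p)).map Ψ)
    (hW0 : ∀ p, 0 ≤ W p) (n : ℕ) {S : Set (Fin n → Fin d → ℝ)} (hS : MeasurableSet S) :
    volume S = ∫⁻ p, {p : (Fin n → Y) × (Fin n → ℝ) | (fun i => Ψ (p.1 i, p.2 i)) ∈ S}.indicator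
      (fun p => ENNReal.ofReal (∏ i, W (p.1 i, p.2 i))) p
        ∂((Measure.pi fun _ => ν).prod volume) := by
  have hWe : Measurable fun p => ENNReal.ofReal (W p) := hW.ennreal_ofReal
  have : SigmaFinite ((ν.prod volume).withDensity fun p => ENNReal.ofReal (W p)) :=
    SigmaFinite.withDensity fun p => (W p).toNNReal
  have : SigmaFinite (((ν.prod volume).withDensity fun p => ENNReal.ofReal (W p)).map Ψ) := by
    rw [← hvol]; infer_instance
  have hF : Measurable fun (x : Fin n → Y × ℝ) i => Ψ (x i) := by fun_prop
  have h1 : (volume : Measure (Fin n → Fin d → ℝ)) =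
      ((Measure.pi fun _ : Fin n => ν.prod (volume : Measure ℝ)).withDensity
        fun x => ∏ i, ENNReal.ofReal (W (x i))).map fun x i => Ψ (x i) := by
    rw [← pi_withDensity_eq n _ hWe, Measure.pi_map_pi fun _ => hΨ.aemeasurable, volume_pi, ← hvol]
  have hmp := measurePreserving_arrowProdEquivProdArrow Y ℝ (Fin n) (fun _ => ν) fun _ => volume
  have h2 := hmp.lintegral_comp_emb (MeasurableEquiv.measurableEmbedding _)
    ({p : (Fin n → Y) × (Fin n → ℝ) | (fun i => Ψ (p.1 i, p.2 i)) ∈ S}.indicator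
      fun p => ENNReal.ofReal (∏ i, W (p.1 i, p.2 i)))
  rw [volume_pi (α := fun _ : Fin n => ℝ), ← h2, h1, Measure.map_apply hF hS,
    withDensity_apply _ (hF hS), ← lintegral_indicator (hF hS)]
  refine lintegral_congr fun x => ?_
  have h3 : ∏ i, ENNReal.ofReal (W (x i)) = ENNReal.ofReal (∏ i, W (x i)) :=
    (ENNReal.ofReal_prod_of_nonneg fun i _ => hW0 _).symm
  by_cases hx : (fun i => Ψ (x i)) ∈ S
  · rw [Set.indicator_of_mem (show x ∈ (fun (x : Fin n → Y × ℝ) i => Ψ (x i)) ⁻¹' S from hx),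
      Set.indicator_of_mem (by exact hx), h3]
    rfl
  · rw [Set.indicator_of_notMem (show x ∉ (fun (x : Fin n → Y × ℝ) i => Ψ (x i)) ⁻¹' S from hx),
      Set.indicator_of_notMem (by exact hx)]

lemma exists_tendsto_volume_shrinking {Y : Type*} [TopologicalSpace Y] [SecondCountableTopology Y]
    [MeasurableSpace Y] [BorelSpace Y] (ν : Measure Y) [SigmaFinite ν] [ν.IsOpenPosMeasure]
    {d : ℕ} {Q : (Fin d → ℝ) → ℝ} {Ψ : Y × ℝ → Fin d → ℝ} {W : Y × ℝ → ℝ}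
    (hΨ : Continuous Ψ) (hW : Continuous W) (hW0 : ∀ p, 0 ≤ W p) {y₀ : Y} (hy₀ : Ψ (y₀, 0) = 0)
    (hWpos : ∀ y s, 0 < s → 0 < W (y, s))
    (hdom : ∀ r : ℝ, ∃ A : Set Y, MeasurableSet A ∧ ν A ≠ ⊤ ∧ ∃ B M : ℝ, ∀ y s, W (y, s) ≠ 0 →
      ∑ j, Ψ (y, s) j ^ 2 ≤ r → y ∈ A ∧ |s| ≤ M ∧ W (y, s) ≤ B)
    (hvol : (volume : Measure (Fin d → ℝ)) =
      ((ν.prod volume).withDensity fun p => ENNReal.ofReal (W p)).map Ψ)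
    (hQ : ∀ p, W p ≠ 0 → Q (Ψ p) = p.2) (hQm : Measurable Q) (m : ℕ) :
    ∃ r : ℝ, 0 < r ∧ ∃ C : ENNReal, C ≠ 0 ∧ C ≠ ⊤ ∧ ∀ a b : Fin m → ℝ, (∀ i, a i ≤ b i) →
      Tendsto (fun ε : ℝ => (ENNReal.ofReal (ε ^ m))⁻¹ *
          volume {v : Fin (m + 1) → Fin d → ℝ | (∀ i : Fin m,
            Q (v i.castSucc) - Q (v i.succ) ∈ Set.Icc (ε * a i) (ε * b i)) ∧
              ∑ i, ∑ j, v i j ^ 2 ≤ r})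
        (nhdsWithin 0 (Set.Ioi 0)) (nhds (C * ENNReal.ofReal (∏ i, (b i - a i)))) := by
  let ζ : Measure (Fin (m + 1) → Y) := Measure.pi fun _ => ν
  let N : (Fin (m + 1) → Y) × (Fin (m + 1) → ℝ) → ℝ := fun p => ∑ i, ∑ j, Ψ (p.1 i, p.2 i) j ^ 2
  let w : (Fin (m + 1) → Y) × (Fin (m + 1) → ℝ) → ENNReal :=
    fun p => ENNReal.ofReal (∏ i, W (p.1 i, p.2 i))
  have hN : Continuous N := by fun_prop
  have hw : Continuous w := ENNReal.continuous_ofReal.comp (by fun_prop)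
  let diag : (Fin (m + 1) → Y) × ℝ → (Fin (m + 1) → Y) × (Fin (m + 1) → ℝ) :=
    fun p => (p.1, fun _ => p.2)
  have hdiag : Continuous diag := by fun_prop
  -- a radius whose level set is null on the diagonal
  obtain ⟨r, hr, hlevel⟩ : ∃ r : ℝ, 0 < r ∧ ζ.prod volume {p | N (diag p) = r} = 0 := by
    have hcount := Measure.countable_meas_level_set_pos (μ := ζ.prod (volume : Measure ℝ))
      (hN.comp hdiag).measurable
    by_contra! hcon
    have : Set.Ioi (0 : ℝ) ⊆ {t : ℝ | 0 < ζ.prod volume {p | (N ∘ diag) p = t}} :=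
      fun t ht => pos_iff_ne_zero.2 (hcon t ht)
    have h0 := (hcount.mono this).measure_zero volume
    simp at h0
  let Φ : (Fin (m + 1) → Y) × (Fin (m + 1) → ℝ) → ENNReal := {p | N p ≤ r}.indicator w
  have hNr : MeasurableSet {p | N p ≤ r} := measurableSet_le hN.measurable measurable_const
  have hΦ : Measurable Φ := hw.measurable.indicator hNr
  obtain ⟨A, hA, hνA, B, M, hAB⟩ := hdom r
  have hζA : ζ (Set.univ.pi fun _ => A) ≠ ⊤ := by
    rw [Measure.pi_pi]; exact ENNReal.prod_ne_top fun _ _ => hνA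
  have hΦdom : ∀ z σ, Φ (z, σ) ≤ ((Set.univ.pi fun _ => A) ×ˢ Set.Icc (-M) M).indicator
      (fun _ => ENNReal.ofReal (B ^ (m + 1))) (z, σ 0) := by
    intro z σ
    by_cases hzero : Φ (z, σ) = 0
    · rw [hzero]; exact zero_le
    have hmem : N (z, σ) ≤ r := Set.mem_of_indicator_ne_zero (s := {p | N p ≤ r}) hzero
    have hΦw : Φ (z, σ) = w (z, σ) := Set.indicator_of_mem (s := {p | N p ≤ r}) hmem w
    have hWne : ∀ i, W (z i, σ i) ≠ 0 := fun i hi => hzero <| by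
      rw [hΦw]
      simp only [w]
      rw [Finset.prod_eq_zero (Finset.mem_univ i) hi, ENNReal.ofReal_zero]
    have hi : ∀ i, z i ∈ A ∧ |σ i| ≤ M ∧ W (z i, σ i) ≤ B := fun i => by
      refine hAB _ _ (hWne i) (le_trans ?_ hmem)
      exact Finset.single_le_sum (f := fun i => ∑ j, Ψ (z i, σ i) j ^ 2)
        (fun i _ => Finset.sum_nonneg fun j _ => sq_nonneg _) (Finset.mem_univ i)
    have hin : (z, σ 0) ∈ (Set.univ.pi fun _ : Fin (m + 1) => A) ×ˢ Set.Icc (-M) M :=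
      ⟨fun i _ => (hi i).1, abs_le.1 (hi 0).2.1⟩
    rw [Set.indicator_of_mem hin, hΦw]
    refine ENNReal.ofReal_le_ofReal ?_
    refine (Finset.prod_le_prod (fun i _ => hW0 _) fun i _ => (hi i).2.2).trans ?_
    simp
  have hΦcont : ∀ᵐ p ∂(ζ.prod (volume : Measure ℝ)),
      ContinuousAt (fun σ => Φ (p.1, σ)) (fun _ => p.2) := by
    have : ∀ᵐ p ∂(ζ.prod (volume : Measure ℝ)), N (diag p) ≠ r := by
      rw [ae_iff]; simpa using hlevel
    filter_upwards [this] with p hp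
    have hNc : Continuous fun σ => N (p.1, σ) := by fun_prop
    have hwc : Continuous fun σ => w (p.1, σ) := by fun_prop
    rcases lt_or_gt_of_ne hp with h | h
    · refine hwc.continuousAt.congr ?_
      filter_upwards [hNc.continuousAt.eventually_lt continuousAt_const h] with σ hσ
      exact (Set.indicator_of_mem (s := {p | N p ≤ r}) hσ.le w).symm
    · refine continuousAt_const (y := (0 : ENNReal)) |>.congr ?_
      filter_upwards [continuousAt_const.eventually_lt hNc.continuousAt h] with σ hσ
      exact (Set.indicator_of_notMem (s := {p | N p ≤ r}) (not_le.2 hσ) w).symm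
  obtain ⟨c, hc, hlim⟩ := tendsto_lintegral_consecutive_diff ζ hΦ
    (MeasurableSet.univ_pi fun _ => hA) hζA ENNReal.ofReal_ne_top hΦdom hΦcont
  refine ⟨r, hr, ENNReal.ofReal c * ∫⁻ p, Φ (diag p) ∂(ζ.prod (volume : Measure ℝ)),
    mul_ne_zero (by simpa using hc) ?_, ENNReal.mul_ne_top ENNReal.ofReal_ne_top ?_, ?_⟩
  · intro h0
    have hΦd : Measurable fun p => Φ (diag p) := hΦ.comp hdiag.measurable
    rw [lintegral_eq_zero_iff hΦd] at h0
    have hcont1 : Continuous fun p : Y × ℝ => ∑ j, Ψ p j ^ 2 := by fun_prop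
    have hev : ∀ᶠ p in nhds (y₀, (0 : ℝ)), ∑ j, Ψ p j ^ 2 < r / (m + 1) := by
      refine hcont1.continuousAt.eventually_lt continuousAt_const ?_
      rw [hy₀]; simp; positivity
    rw [nhds_prod_eq, Filter.eventually_prod_iff] at hev
    obtain ⟨p₁, hp₁, p₂, hp₂, hp⟩ := hev
    obtain ⟨U, hU, hUo, hyU⟩ := eventually_nhds_iff.1 hp₁
    obtain ⟨δ, hδ, hδp⟩ := Metric.eventually_nhds_iff.1 hp₂
    have hpos : 0 < ζ.prod volume ((Set.univ.pi fun _ => U) ×ˢ Set.Ioo (0 : ℝ) δ) := by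
      rw [Measure.prod_prod, Measure.pi_pi, Real.volume_Ioo]
      refine ENNReal.mul_pos (Finset.prod_ne_zero_iff.2 fun _ _ => ?_) (by simpa using hδ)
      exact (hUo.measure_pos ν ⟨_, hyU⟩).ne'
    refine hpos.ne' (measure_mono_null ?_ h0)
    rintro ⟨z, s⟩ ⟨hz, hs⟩
    have hNle : N (diag (z, s)) ≤ r := by
      have : ∀ i, ∑ j, Ψ (z i, s) j ^ 2 ≤ r / (m + 1) := fun i =>
        (hp (hU _ (hz i trivial)) (hδp (by simpa [abs_of_pos hs.1] using hs.2))).le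
      refine (Finset.sum_le_sum fun i _ => this i).trans ?_
      simp
      rw [mul_div_cancel₀]
      positivity
    have hval : Φ (diag (z, s)) = w (diag (z, s)) :=
      Set.indicator_of_mem (s := {p | N p ≤ r}) hNle w
    change ¬ (Φ (diag (z, s)) = 0)
    rw [hval]
    simp only [w, ENNReal.ofReal_eq_zero, not_le]
    exact Finset.prod_pos fun i _ => hWpos _ _ hs.1
  · refine ne_top_of_le_ne_top ?_ (lintegral_mono fun p => hΦdom p.1 fun _ => p.2)
    have hAM := (MeasurableSet.univ_pi fun _ : Fin (m + 1) => hA).prod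
      (measurableSet_Icc (a := -M) (b := M))
    rw [lintegral_indicator_const hAM, Measure.prod_prod]
    exact ENNReal.mul_ne_top ENNReal.ofReal_ne_top
      (ENNReal.mul_ne_top hζA measure_Icc_lt_top.ne)
  · intro a b hab
    have h := hlim a b hab
    rw [ENNReal.ofReal_mul hc.le, mul_right_comm] at h
    refine h.congr fun ε => ?_
    congr 1
    rw [volume_pi_eq_lintegral_of_map ν hΨ.measurable hW.measurable hvol hW0]
    · refine lintegral_congr fun p => ?_
      by_cases hp : w p = 0
      · have : Φ p = 0 := by simp [Φ, Set.indicator_apply, hp]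
        simp only [Set.indicator_apply, this]
        change _ = ite _ (w p) _
        simp [hp]
      · have hWne : ∀ i, W (p.1 i, p.2 i) ≠ 0 := fun i hi => hp <| by
          simp only [w]
          rw [Finset.prod_eq_zero (Finset.mem_univ i) hi, ENNReal.ofReal_zero]
        simp only [Set.indicator_apply, Set.mem_ofPred_eq, hQ _ (hWne _), Φ, ite_and]
        rfl
    · refine MeasurableSet.inter ?_ (measurableSet_le
        (by fun_prop : Measurable fun v : Fin (m + 1) → Fin d → ℝ => ∑ i, ∑ j, v i j ^ 2)
        measurable_const)
      change MeasurableSet {v : Fin (m + 1) → Fin d → ℝ | ∀ i : Fin m,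
        Q (v i.castSucc) - Q (v i.succ) ∈ Set.Icc (ε * a i) (ε * b i)}
      rw [Set.ofPred_forall]
      refine MeasurableSet.iInter fun i => ?_
      exact (by fun_prop : Measurable fun v : Fin (m + 1) → Fin d → ℝ =>
        Q (v i.castSucc) - Q (v i.succ)) measurableSet_Icc

lemma tendsto_volume_dilation {d m : ℕ} {Q : (Fin d → ℝ) → ℝ}
    (hQ : ∀ (c : ℝ) v, Q (c • v) = c ^ 2 * Q v) {r : ℝ} (hr : 0 < r) (a b : Fin m → ℝ) {C : ENNReal}
    (hC : C ≠ ⊤)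
    (hlim : Tendsto (fun ε : ℝ => (ENNReal.ofReal (ε ^ m))⁻¹ *
          volume {v : Fin (m + 1) → Fin d → ℝ | (∀ i : Fin m,
            Q (v i.castSucc) - Q (v i.succ) ∈ Set.Icc (ε * a i) (ε * b i)) ∧
              ∑ i, ∑ j, v i j ^ 2 ≤ r})
        (nhdsWithin 0 (Set.Ioi 0)) (nhds C)) :
    Tendsto (fun T : ℝ => T ^ (2 * (m : ℝ) - (m + 1) * d) *
        (volume {v : Fin (m + 1) → Fin d → ℝ | (∀ i : Fin m,
          Q (v i.castSucc) - Q (v i.succ) ∈ Set.Icc (a i) (b i)) ∧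
            ∑ i, ∑ j, v i j ^ 2 ≤ T ^ 2}).toReal)
      atTop (nhds (r ^ m * (√r ^ ((m + 1) * d))⁻¹ * C.toReal)) := by
  have hε : Tendsto (fun T : ℝ => r / T ^ 2) atTop (nhdsWithin 0 (Set.Ioi 0)) := by
    refine tendsto_nhdsWithin_iff.2 ⟨Tendsto.div_atTop tendsto_const_nhds
      (tendsto_pow_atTop two_ne_zero), ?_⟩
    filter_upwards [eventually_gt_atTop 0] with T hT
    exact div_pos hr (by positivity)
  have h := (((ENNReal.tendsto_toReal hC).comp hlim).comp hε).const_mul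
    (r ^ m * (√r ^ ((m + 1) * d))⁻¹)
  refine h.congr' ?_
  filter_upwards [eventually_gt_atTop 0] with T hT
  have hsr : 0 < √r := Real.sqrt_pos.2 hr
  have hk : 0 < T / √r := div_pos hT hsr
  have hk2 : (T / √r) ^ 2 = T ^ 2 / r := by rw [div_pow, Real.sq_sqrt hr.le]
  have hset : {v : Fin (m + 1) → Fin d → ℝ | (∀ i : Fin m,
      Q (v i.castSucc) - Q (v i.succ) ∈ Set.Icc (r / T ^ 2 * a i) (r / T ^ 2 * b i)) ∧
        ∑ i, ∑ j, v i j ^ 2 ≤ r} =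
      (fun v => (T / √r) • v) ⁻¹' {v : Fin (m + 1) → Fin d → ℝ | (∀ i : Fin m,
        Q (v i.castSucc) - Q (v i.succ) ∈ Set.Icc (a i) (b i)) ∧
          ∑ i, ∑ j, v i j ^ 2 ≤ T ^ 2} := by
    ext v
    simp only [Set.mem_preimage, Set.mem_ofPred_eq, Pi.smul_apply, hQ, ← mul_sub, smul_eq_mul,
      mul_pow, ← Finset.mul_sum, hk2, Set.mem_Icc]
    have hT2 : 0 < T ^ 2 := by positivity
    refine and_congr (forall_congr' fun i => and_congr ?_ ?_) ?_
    · rw [div_mul_eq_mul_div, div_mul_eq_mul_div, div_le_iff₀ hT2, le_div_iff₀ hr]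
      constructor <;> intro h <;> linarith
    · rw [div_mul_eq_mul_div, div_mul_eq_mul_div, le_div_iff₀ hT2, div_le_iff₀ hr]
      constructor <;> intro h <;> linarith
    · rw [div_mul_eq_mul_div, div_le_iff₀ hr, mul_le_mul_iff_right₀ hT2]
  simp only [Function.comp_apply]
  rw [hset, Measure.addHaar_preimage_smul _ hk.ne']
  have hfin : Module.finrank ℝ (Fin (m + 1) → Fin d → ℝ) = (m + 1) * d := by
    simp [Module.finrank_pi_fintype]
  rw [hfin, ENNReal.toReal_mul, ENNReal.toReal_mul, ENNReal.toReal_inv,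
    ENNReal.toReal_ofReal (by positivity), ENNReal.toReal_ofReal (abs_nonneg _),
    abs_of_pos (by positivity)]
  have hpow : T ^ (2 * (m : ℝ) - (m + 1) * d) = T ^ (2 * m) / T ^ ((m + 1) * d) := by
    rw [Real.rpow_sub hT, ← Real.rpow_natCast, ← Real.rpow_natCast]
    push_cast; rfl
  rw [hpow, ← mul_assoc, ← mul_assoc]
  congr 1
  rw [div_pow, div_pow, pow_mul T 2 m]
  field_simp

lemma volume_euclidean_eq_volume_pi (m d : ℕ) : ∃ c : ℝ, 0 < c ∧
    ∀ S : Set (Fin m → Fin d → ℝ), MeasurableSet S →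
      volume {v : EuclideanSpace ℝ (Fin m × Fin d) | (fun i j => v (i, j)) ∈ S} =
        ENNReal.ofReal c * volume S := by
  let L : EuclideanSpace ℝ (Fin m × Fin d) ≃ₗ[ℝ] (Fin m → Fin d → ℝ) :=
    (WithLp.linearEquiv 2 ℝ _).trans (LinearEquiv.curry ℝ ℝ _ _)
  obtain ⟨c, hc, h⟩ := LinearEquiv.exists_map_addHaar_eq_smul L volume volume
  refine ⟨c, hc, fun S hS => ?_⟩
  have h2 : volume.map L S = (ENNReal.ofReal c • volume) S := by rw [h]
  have hL : Measurable L := L.toContinuousLinearEquiv.continuous.measurable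
  rw [Measure.map_apply hL hS] at h2
  exact h2

section Polar

variable {E : Type*} [NormedAddCommGroup E] [InnerProductSpace ℝ E] [FiniteDimensional ℝ E]
  [MeasurableSpace E] [BorelSpace E]

lemma lintegral_eq_lintegral_toSphere_sqrt {k : ℕ} (hk : 1 ≤ k) (hE : Module.finrank ℝ E = k + 2)
    {f : E → ENNReal} (hf : Measurable f) :
    ∫⁻ x, f x = ∫⁻ ω : Metric.sphere (0 : E) 1,
      (∫⁻ a : ℝ, ENNReal.ofReal (2⁻¹ * √a ^ k) * f (√a • (ω : E)))
      ∂(volume : Measure E).toSphere := by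
  have : Nontrivial E := Module.nontrivial_of_finrank_pos (R := ℝ) (by omega)
  have hmp := (volume : Measure E).measurePreserving_homeomorphUnitSphereProd
  have h1 := hmp.lintegral_comp_emb (Homeomorph.measurableEmbedding _)
    fun p => f ((p.2 : ℝ) • (p.1 : E))
  have h2 : ∀ x : ({0}ᶜ : Set E), f (((homeomorphUnitSphereProd E x).2 : ℝ) •
      ((homeomorphUnitSphereProd E x).1 : E)) = f x := fun x => by
    congr 1
    exact congrArg Subtype.val ((homeomorphUnitSphereProd E).symm_apply_apply x)
  simp only [h2] at h1
  have hg : Measurable fun p : Metric.sphere (0 : E) 1 × Set.Ioi (0 : ℝ) =>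
      f ((p.2 : ℝ) • (p.1 : E)) := by fun_prop
  rw [← restrict_compl_singleton (μ := (volume : Measure E)) 0,
    ← lintegral_subtype_comap (measurableSet_singleton 0).compl f, h1,
    lintegral_prod _ hg.aemeasurable, restrict_compl_singleton]
  refine lintegral_congr fun ω => ?_
  have hIoi : Real.sqrt '' Set.Ioi 0 = Set.Ioi 0 := by
    ext x
    refine ⟨?_, fun hx => ⟨x ^ 2, pow_pos (Set.mem_Ioi.1 hx) 2, Real.sqrt_sq (le_of_lt hx)⟩⟩
    rintro ⟨y, hy, rfl⟩
    exact Real.sqrt_pos.2 hy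
  have hcov := lintegral_image_eq_lintegral_abs_deriv_mul measurableSet_Ioi
    (fun x hx => (Real.hasDerivAt_sqrt (ne_of_gt hx)).hasDerivWithinAt)
    (fun x hx y hy h => (Real.sqrt_inj (le_of_lt hx) (le_of_lt hy)).1 h)
    fun r => ENNReal.ofReal (r ^ (k + 1)) * f (r • (ω : E))
  rw [hIoi] at hcov
  rw [hE, Measure.volumeIoiPow, lintegral_withDensity_eq_lintegral_mul₀ (by fun_prop) (by fun_prop)]
  simp only [Pi.mul_apply]
  rw [lintegral_subtype_comap measurableSet_Ioi
    (fun r : ℝ => ENNReal.ofReal (r ^ (k + 2 - 1)) * f (r • (ω : E))),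
    show k + 2 - 1 = k + 1 from rfl,
    hcov, ← lintegral_indicator measurableSet_Ioi]
  refine lintegral_congr fun a => ?_
  by_cases ha : 0 < a
  · rw [Set.indicator_of_mem (by exact ha), ← mul_assoc, ← ENNReal.ofReal_mul (abs_nonneg _)]
    have hs : 0 < √a := Real.sqrt_pos.2 ha
    rw [abs_of_pos (by positivity)]
    congr 2
    field_simp
    ring
  · rw [Set.indicator_of_notMem (by exact ha), Real.sqrt_eq_zero_of_nonpos (not_lt.1 ha)]
    simp [show k ≠ 0 by omega]

lemma prod_volume_eq_map_withDensity {F : Type*} [TopologicalSpace F] [MeasurableSpace F]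
    [BorelSpace F] [SecondCountableTopology F] (μ : Measure F) [SigmaFinite μ]
    {k : ℕ} (hk : 1 ≤ k) (hE : Module.finrank ℝ E = k + 2) {N : F → ℝ} (hN : Continuous N) :
    (volume : Measure E).prod μ =
      ((((volume : Measure E).toSphere.prod μ).prod (volume : Measure ℝ)).withDensity
        fun p => ENNReal.ofReal (2⁻¹ * √(p.2 + N p.1.2) ^ k)).map
          fun p => (√(p.2 + N p.1.2) • (p.1.1 : E), p.1.2) := by
  have hΨ : Measurable fun p : (Metric.sphere (0 : E) 1 × F) × ℝ =>
      (√(p.2 + N p.1.2) • (p.1.1 : E), p.1.2) := by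
    refine Continuous.measurable ?_
    fun_prop
  have hW : Measurable fun p : (Metric.sphere (0 : E) 1 × F) × ℝ =>
      ENNReal.ofReal (2⁻¹ * √(p.2 + N p.1.2) ^ k) := by
    have := hN.measurable
    fun_prop
  refine Measure.ext fun S hS => ?_
  have hS1 : Measurable (S.indicator fun _ : E × F => (1 : ENNReal)) := measurable_one.indicator hS
  have hG : Measurable fun p : (Metric.sphere (0 : E) 1 × F) × ℝ =>
      ENNReal.ofReal (2⁻¹ * √(p.2 + N p.1.2) ^ k) *
        S.indicator (fun _ => (1 : ENNReal)) (√(p.2 + N p.1.2) • (p.1.1 : E), p.1.2) :=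
    hW.mul (hS1.comp hΨ)
  rw [Measure.map_apply hΨ hS, withDensity_apply _ (hΨ hS), ← lintegral_indicator (hΨ hS)]
  trans ∫⁻ p : (Metric.sphere (0 : E) 1 × F) × ℝ, ENNReal.ofReal (2⁻¹ * √(p.2 + N p.1.2) ^ k) *
        S.indicator (fun _ => (1 : ENNReal)) (√(p.2 + N p.1.2) • (p.1.1 : E), p.1.2)
          ∂((volume : Measure E).toSphere.prod μ).prod volume
  · rw [lintegral_prod _ hG.aemeasurable, lintegral_prod_symm' _ hG.lintegral_prod_right',
      ← lintegral_indicator_one hS]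
    change ∫⁻ z, S.indicator (fun _ => (1 : ENNReal)) z ∂(volume : Measure E).prod μ = _
    rw [lintegral_prod_symm' _ hS1]
    refine lintegral_congr fun y => ?_
    rw [lintegral_eq_lintegral_toSphere_sqrt hk hE
      (f := fun x => S.indicator (fun _ => (1 : ENNReal)) (x, y))
      (hS1.comp measurable_prodMk_right)]
    refine lintegral_congr fun ω => ?_
    rw [← lintegral_add_right_eq_self _ (N y)]
  · refine lintegral_congr fun p => ?_
    by_cases hp : (√(p.2 + N p.1.2) • (p.1.1 : E), p.1.2) ∈ S
    · rw [Set.indicator_of_mem hp, mul_one, Set.indicator_of_mem (by exact hp)]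
    · rw [Set.indicator_of_notMem hp, mul_zero, Set.indicator_of_notMem (by exact hp)]

end Polar

lemma exists_tendsto_volume_of_orthogonal_decomposition {E F : Type*} [NormedAddCommGroup E]
    [InnerProductSpace ℝ E] [FiniteDimensional ℝ E] [MeasurableSpace E] [BorelSpace E]
    [NormedAddCommGroup F] [InnerProductSpace ℝ F] [FiniteDimensional ℝ F] [MeasurableSpace F]
    [BorelSpace F] {d : ℕ} (hE : 3 ≤ Module.finrank ℝ E) (L : (E × F) ≃ₗ[ℝ] (Fin d → ℝ))
    {Q : (Fin d → ℝ) → ℝ} (hQ : ∀ x y, Q (L (x, y)) = ‖x‖ ^ 2 - ‖y‖ ^ 2) (m : ℕ) :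
    ∃ r : ℝ, 0 < r ∧ ∃ C : ENNReal, C ≠ 0 ∧ C ≠ ⊤ ∧ ∀ a b : Fin m → ℝ, (∀ i, a i ≤ b i) →
      Tendsto (fun ε : ℝ => (ENNReal.ofReal (ε ^ m))⁻¹ *
          volume {v : Fin (m + 1) → Fin d → ℝ | (∀ i : Fin m,
            Q (v i.castSucc) - Q (v i.succ) ∈ Set.Icc (ε * a i) (ε * b i)) ∧
              ∑ i, ∑ j, v i j ^ 2 ≤ r})
        (nhdsWithin 0 (Set.Ioi 0)) (nhds (C * ENNReal.ofReal (∏ i, (b i - a i)))) := by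
  obtain ⟨k, hk, hEk⟩ : ∃ k, 1 ≤ k ∧ Module.finrank ℝ E = k + 2 :=
    ⟨Module.finrank ℝ E - 2, by omega, by omega⟩
  have : Nontrivial E := Module.nontrivial_of_finrank_pos (R := ℝ) (by omega)
  obtain ⟨c, hc, hL⟩ := LinearEquiv.exists_map_addHaar_eq_smul L
    ((volume : Measure E).prod (volume : Measure F)) volume
  have hLc : Continuous L := L.toContinuousLinearEquiv.continuous
  have hLm : Measurable L := hLc.measurable
  have hN : Continuous fun y : F => ‖y‖ ^ 2 := by fun_prop
  let Ψ₀ : (Metric.sphere (0 : E) 1 × F) × ℝ → E × F :=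
    fun p => (√(p.2 + ‖p.1.2‖ ^ 2) • (p.1.1 : E), p.1.2)
  have hΨ₀ : Continuous Ψ₀ := by fun_prop
  let W : (Metric.sphere (0 : E) 1 × F) × ℝ → ℝ :=
    fun p => c⁻¹ * (2⁻¹ * √(p.2 + ‖p.1.2‖ ^ 2) ^ k)
  have hW : Continuous W := by fun_prop
  have hWsupp : ∀ p, W p ≠ 0 → 0 < p.2 + ‖p.1.2‖ ^ 2 := fun p hp => by
    by_contra! h
    exact hp (by simp [W, Real.sqrt_eq_zero_of_nonpos h, show k ≠ 0 by omega])
  have hnorm : ∀ p : (Metric.sphere (0 : E) 1 × F) × ℝ, ‖(Ψ₀ p).1‖ = √(p.2 + ‖p.1.2‖ ^ 2) :=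
    fun p => by simp [Ψ₀, norm_smul, abs_of_nonneg]
  obtain ⟨ω₀⟩ : Nonempty (Metric.sphere (0 : E) 1) :=
    (NormedSpace.sphere_nonempty.2 zero_le_one).to_subtype
  refine exists_tendsto_volume_shrinking (Y := Metric.sphere (0 : E) 1 × F)
    ((volume : Measure E).toSphere.prod volume) (Ψ := fun p => L (Ψ₀ p)) (W := W) (y₀ := (ω₀, 0))
    (hLc.comp hΨ₀) hW (fun p => by positivity) ?_ ?_ ?_ ?_ ?_ ?_ m
  · simp [Ψ₀]
  · intro y s hs
    have : 0 < √(s + ‖y.2‖ ^ 2) := Real.sqrt_pos.2 (by positivity)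
    positivity
  · intro r
    let R := ‖(L.symm.toContinuousLinearEquiv : (Fin d → ℝ) →L[ℝ] E × F)‖ * √r
    have hR : 0 ≤ R := by positivity
    refine ⟨Set.univ ×ˢ Metric.closedBall 0 R, MeasurableSet.univ.prod measurableSet_closedBall,
      ?_, c⁻¹ * (2⁻¹ * R ^ k), R ^ 2, fun y s hWy hr => ?_⟩
    · rw [Measure.prod_prod]
      exact ENNReal.mul_ne_top (measure_ne_top _ _) measure_closedBall_lt_top.ne
    have hle : ‖Ψ₀ (y, s)‖ ≤ R := by
      have h1 := (L.symm.toContinuousLinearEquiv : (Fin d → ℝ) →L[ℝ] E × F).le_opNorm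
        (L (Ψ₀ (y, s)))
      have h2 : ‖L (Ψ₀ (y, s))‖ ≤ √r := (pi_norm_le_iff_of_nonneg (Real.sqrt_nonneg _)).2 fun j =>
        Real.abs_le_sqrt ((Finset.single_le_sum (f := fun j => L (Ψ₀ (y, s)) j ^ 2)
          (fun _ _ => sq_nonneg _) (Finset.mem_univ j)).trans hr)
      have h3 : (L.symm.toContinuousLinearEquiv : (Fin d → ℝ) →L[ℝ] E × F) (L (Ψ₀ (y, s))) =
        Ψ₀ (y, s) := L.symm_apply_apply _
      rw [h3] at h1
      exact h1.trans (mul_le_mul_of_nonneg_left h2 (norm_nonneg _))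
    have hx : √(s + ‖y.2‖ ^ 2) ≤ R := by
      rw [← hnorm (y, s)]
      exact (norm_fst_le _).trans hle
    have hy : ‖y.2‖ ≤ R := (norm_snd_le (Ψ₀ (y, s))).trans hle
    have hs : 0 < s + ‖y.2‖ ^ 2 := hWsupp _ hWy
    have hs2 : s + ‖y.2‖ ^ 2 ≤ R ^ 2 := (Real.sqrt_le_left hR).1 hx
    have hy2 : ‖y.2‖ ^ 2 ≤ R ^ 2 := by gcongr
    refine ⟨⟨trivial, by simpa using hy⟩, abs_le.2 ⟨by linarith, by nlinarith [sq_nonneg ‖y.2‖]⟩,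
      ?_⟩
    simp only [W]
    gcongr
  · have h1 : (volume : Measure (Fin d → ℝ)) = ENNReal.ofReal c⁻¹ •
        ((volume : Measure E).prod (volume : Measure F)).map L := by
      rw [hL, smul_smul, ← ENNReal.ofReal_mul (by positivity), inv_mul_cancel₀ hc.ne']
      simp
    have hWm : Measurable fun p : (Metric.sphere (0 : E) 1 × F) × ℝ =>
        ENNReal.ofReal (2⁻¹ * √(p.2 + ‖p.1.2‖ ^ 2) ^ k) :=
      ENNReal.measurable_ofReal.comp (Continuous.measurable (by fun_prop))
    rw [h1, prod_volume_eq_map_withDensity volume hk hEk hN, Measure.map_map hLm hΨ₀.measurable,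
      ← Measure.map_smul, ← withDensity_smul _ hWm]
    congr 2
    ext p
    simp only [W, Pi.smul_apply, smul_eq_mul]
    rw [← ENNReal.ofReal_mul (by positivity)]
  · intro p hp
    rw [hQ, hnorm, Real.sq_sqrt (hWsupp p hp).le]
    ring
  · have : Continuous fun v => ‖(L.symm v).1‖ ^ 2 - ‖(L.symm v).2‖ ^ 2 := by
      have : Continuous L.symm := L.symm.toContinuousLinearEquiv.continuous
      fun_prop
    refine (this.congr fun v => ?_).measurable
    rw [← hQ, Prod.mk.eta, L.apply_symm_apply]

lemma exists_linearEquiv_signature {d : ℕ} (P : Fin d → Prop) [DecidablePred P]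
    (g : (Fin d → ℝ) ≃ₗ[ℝ] (Fin d → ℝ)) :
    ∃ L : (EuclideanSpace ℝ {i // P i} × EuclideanSpace ℝ {i // ¬P i}) ≃ₗ[ℝ] (Fin d → ℝ),
      ∀ x y, ∑ i, (if P i then (1 : ℝ) else -1) * g (L (x, y)) i ^ 2 = ‖x‖ ^ 2 - ‖y‖ ^ 2 := by
  let e : (EuclideanSpace ℝ {i // P i} × EuclideanSpace ℝ {i // ¬P i}) ≃ₗ[ℝ] (Fin d → ℝ) :=
    ((WithLp.linearEquiv 2 ℝ _).prodCongr (WithLp.linearEquiv 2 ℝ _)).trans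
      ((LinearEquiv.sumArrowLequivProdArrow {i // P i} {i // ¬P i} ℝ ℝ).symm.trans
        (LinearEquiv.funCongrLeft ℝ ℝ (Equiv.sumCompl P).symm))
  refine ⟨e.trans g.symm, fun x y => ?_⟩
  have he : ∀ i, e (x, y) (Equiv.sumCompl P i) = Sum.elim (fun i => x i) (fun i => y i) i :=
      fun i => by
    change Sum.elim _ _ ((Equiv.sumCompl P).symm (Equiv.sumCompl P i)) = _
    rw [Equiv.symm_apply_apply]
    rfl
  simp only [LinearEquiv.trans_apply, LinearEquiv.apply_symm_apply]
  rw [← (Equiv.sumCompl P).sum_comp, Fintype.sum_sum_type]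
  simp only [he, Sum.elim_inl, Sum.elim_inr, EuclideanSpace.real_norm_sq_eq]
  rw [sub_eq_add_neg, ← Finset.sum_neg_distrib]
  congr 1 <;> refine Finset.sum_congr rfl fun i _ => ?_
  · rw [Equiv.sumCompl_apply_inl, if_pos i.2, one_mul]
  · rw [Equiv.sumCompl_apply_inr, if_neg i.2, neg_one_mul]

lemma exists_tendsto_volume_euclidean {E F : Type*} [NormedAddCommGroup E]
    [InnerProductSpace ℝ E] [FiniteDimensional ℝ E] [MeasurableSpace E] [BorelSpace E]
    [NormedAddCommGroup F] [InnerProductSpace ℝ F] [FiniteDimensional ℝ F] [MeasurableSpace F]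
    [BorelSpace F] {d : ℕ} (hE : 3 ≤ Module.finrank ℝ E) (L : (E × F) ≃ₗ[ℝ] (Fin d → ℝ))
    {Q : (Fin d → ℝ) → ℝ} (hQ : ∀ x y, Q (L (x, y)) = ‖x‖ ^ 2 - ‖y‖ ^ 2) (m : ℕ) :
    ∃ C : ℝ, 0 < C ∧ ∀ a b : Fin m → ℝ, (∀ i, a i ≤ b i) →
      Tendsto (fun T : ℝ => T ^ (2 * (m : ℝ) - (m + 1) * d) *
          (volume {v : EuclideanSpace ℝ (Fin (m + 1) × Fin d) | (∀ i : Fin m,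
            Q (fun j => v (i.castSucc, j)) - Q (fun j => v (i.succ, j)) ∈ Set.Icc (a i) (b i)) ∧
              ‖v‖ ≤ T}).toReal)
        atTop (nhds (C * ∏ i, (b i - a i))) := by
  have hhom : ∀ (c : ℝ) v, Q (c • v) = c ^ 2 * Q v := fun c v => by
    obtain ⟨⟨x, y⟩, rfl⟩ := L.surjective v
    rw [← map_smul, Prod.smul_mk, hQ, hQ, norm_smul, norm_smul, mul_pow, mul_pow, Real.norm_eq_abs,
      sq_abs]
    ring
  have hQc : Continuous Q := by
    have hL : Continuous L.symm := L.symm.toContinuousLinearEquiv.continuous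
    have : Continuous fun v => ‖(L.symm v).1‖ ^ 2 - ‖(L.symm v).2‖ ^ 2 := by fun_prop
    exact this.congr fun v => by rw [← hQ, Prod.mk.eta, L.apply_symm_apply]
  obtain ⟨c, hc, hvol⟩ := volume_euclidean_eq_volume_pi (m + 1) d
  obtain ⟨r, hr, C, hC0, hC, hlim⟩ :=
    exists_tendsto_volume_of_orthogonal_decomposition hE L hQ m
  have hsr : 0 < √r := Real.sqrt_pos.2 hr
  refine ⟨c * (r ^ m * (√r ^ ((m + 1) * d))⁻¹ * C.toReal),
    mul_pos hc (mul_pos (by positivity) (ENNReal.toReal_pos hC0 hC)), fun a b hab => ?_⟩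
  have h := (tendsto_volume_dilation hhom hr a b (ENNReal.mul_ne_top hC ENNReal.ofReal_ne_top)
    (hlim a b hab)).const_mul c
  rw [ENNReal.toReal_mul,
    ENNReal.toReal_ofReal (Finset.prod_nonneg fun i _ => sub_nonneg.2 (hab i)), ← mul_assoc,
    ← mul_assoc] at h
  rw [← mul_assoc c]
  refine h.congr' ?_
  filter_upwards [eventually_ge_atTop 0] with T hT
  have hclosed : IsClosed {v : Fin (m + 1) → Fin d → ℝ | (∀ i : Fin m,
      Q (v i.castSucc) - Q (v i.succ) ∈ Set.Icc (a i) (b i)) ∧ ∑ i, ∑ j, v i j ^ 2 ≤ T ^ 2} := by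
    refine IsClosed.inter ?_ (isClosed_le
      (by fun_prop : Continuous fun v : Fin (m + 1) → Fin d → ℝ => ∑ i, ∑ j, v i j ^ 2)
      continuous_const)
    change IsClosed {v : Fin (m + 1) → Fin d → ℝ | ∀ i : Fin m,
      Q (v i.castSucc) - Q (v i.succ) ∈ Set.Icc (a i) (b i)}
    rw [Set.ofPred_forall]
    exact isClosed_iInter fun i => isClosed_Icc.preimage
      (by fun_prop : Continuous fun v : Fin (m + 1) → Fin d → ℝ => Q (v i.castSucc) - Q (v i.succ))
  have h1 := hvol _ hclosed.measurableSet
  have hset : {v : EuclideanSpace ℝ (Fin (m + 1) × Fin d) | (∀ i : Fin m,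
      Q (fun j => v (i.castSucc, j)) - Q (fun j => v (i.succ, j)) ∈ Set.Icc (a i) (b i)) ∧
        ‖v‖ ≤ T} = {v | (fun i j => v (i, j)) ∈ {v : Fin (m + 1) → Fin d → ℝ | (∀ i : Fin m,
      Q (v i.castSucc) - Q (v i.succ) ∈ Set.Icc (a i) (b i)) ∧ ∑ i, ∑ j, v i j ^ 2 ≤ T ^ 2}} := by
    ext v
    simp only [Set.mem_ofPred_eq]
    rw [← Fintype.sum_prod_type (f := fun p => v p ^ 2), ← EuclideanSpace.real_norm_sq_eq,
      pow_le_pow_iff_left₀ (norm_nonneg _) hT two_ne_zero]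
  rw [hset, h1, ENNReal.toReal_mul, ENNReal.toReal_ofReal hc.le]
  ring

theorem stmt_16 (d n p q : ℕ) (hd : 5 ≤ d) (hn : 2 ≤ n) (hp : 1 ≤ p) (hq : 1 ≤ q)
    (hpq : p + q = d)
    (Q : (Fin d → ℝ) → ℝ)
    (g : (Fin d → ℝ) ≃ₗ[ℝ] (Fin d → ℝ))
    (hQ : ∀ v, Q v = ∑ i : Fin d, (if (i : ℕ) < p then (1 : ℝ) else -1) * (g v i) ^ 2) :
    ∃ C : ℝ, 0 < C ∧
      ∀ a b : Fin (n - 1) → ℝ, (∀ i, a i ≤ b i) →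
        Tendsto (fun T : ℝ =>
            T ^ (-((n : ℝ) * d - 2 * ((n : ℝ) - 1))) *
              (volume {v : EuclideanSpace ℝ (Fin n × Fin d) |
                (∀ i : Fin (n - 1),
                  Q (fun j => v (⟨i.1, by have := i.2; omega⟩, j)) -
                      Q (fun j => v (⟨i.1 + 1, by have := i.2; omega⟩, j)) ∈
                    Set.Icc (a i) (b i)) ∧ ‖v‖ ≤ T}).toReal)
          atTop (nhds (C * ∏ i : Fin (n - 1), (b i - a i))) := by
  obtain ⟨m, rfl⟩ : ∃ m, n = m + 1 := ⟨n - 1, by omega⟩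
  have hexp : -(((m + 1 : ℕ) : ℝ) * d - 2 * (((m + 1 : ℕ) : ℝ) - 1)) =
      2 * (m : ℝ) - (m + 1) * d := by
    push_cast
    ring
  rw [hexp]
  have hcard : Fintype.card {i : Fin d // (i : ℕ) < p} = p := by
    rw [Fintype.card_subtype, Fin.card_filter_val_lt, min_eq_right (by omega)]
  by_cases h3 : 3 ≤ p
  · obtain ⟨L, hL⟩ := exists_linearEquiv_signature (fun i : Fin d => (i : ℕ) < p) g
    exact exists_tendsto_volume_euclidean (by simpa [hcard] using h3) L (Q := Q)
      (fun x y => by rw [hQ]; exact hL x y) m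
  · obtain ⟨L, hL⟩ := exists_linearEquiv_signature (fun i : Fin d => ¬(i : ℕ) < p) g
    have hcard' : Fintype.card {i : Fin d // ¬(i : ℕ) < p} = d - p := by
      rw [Fintype.card_subtype_compl, hcard, Fintype.card_fin]
    obtain ⟨C, hC, h⟩ := exists_tendsto_volume_euclidean (Q := fun v => -Q v)
      (by rw [finrank_euclideanSpace, hcard']; omega) L (fun x y => by
        rw [hQ, ← hL, ← Finset.sum_neg_distrib]
        refine Finset.sum_congr rfl fun i _ => ?_
        split_ifs <;> ring) m
    refine ⟨C, hC, fun a b hab => ?_⟩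
    have h' := h (fun i => -b i) (fun i => -a i) fun i => neg_le_neg (hab i)
    simp only [neg_sub_neg] at h'
    refine h'.congr fun T => ?_
    congr 3
    ext v
    refine and_congr_left fun _ => forall_congr' fun i => ?_
    rw [Set.mem_Icc, Set.mem_Icc, and_comm]
    exact and_congr (by rw [← neg_sub, neg_le_neg_iff]; rfl)
      (by rw [← neg_sub, neg_le_neg_iff]; rfl)
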